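/- arXiv:1810.08566 — 5 statements merged into one kernel-verified Lean document; each statement's English description precedes it below -/
import Mathlib

section
/- Define f, g, h : ℂ³ → ℂ by f(α,β,γ) = e^{2πiγ} + e^{-2πiγ}, g(α,β,γ) = e^{2πi(γ-α-β)} + e^{-2πi(γ-α-β)}, and h(α,β,γ) = e^{2πi(α-β)} + e^{-2πi(α-β)}. Then the map F = (f,g,h) : ℂ³ → ℂ³ is complex-differentiable everywhere, and at every point (α,β,γ) ∈ ℂ³ such that 2γ ∉ ℤ, 2(γ-α-β) ∉ ℤ and 2(α-β) ∉ ℤ, the (Fréchet) derivative of F is a linear isomorphism of ℂ³ (equivalently, the Jacobian determinant of F is nonzero there). In particular f, g, h are functionally independent at the very general point of ℂ³. -/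
open Complex

/-! The map is a coordinatewise function of linear forms: `F = (φ × φ × φ) ∘ L` with
`φ w = e^{2πiw} + e^{-2πiw} = 2 cos (2πw)` and `L (α, β, γ) = (γ, γ - α - β, α - β)` a linear
automorphism. Hence `F` has bijective derivative at `p` exactly when `φ'` vanishes at none of the
coordinates of `L p`, and `φ' w = -4π sin (2πw)` vanishes exactly when `2w` is an integer. -/

section BijectiveDerivative

open Function

variable {𝕜 : Type*} [NontriviallyNormedField 𝕜]

theorem bijective_fderiv_iff_deriv_ne_zero {f : 𝕜 → 𝕜} {x : 𝕜} :
    Bijective (fderiv 𝕜 f x) ↔ deriv f x ≠ 0 := by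
  have fderiv_eq_mul : ⇑(fderiv 𝕜 f x) = (· * deriv f x) :=
    funext fun y ↦ fderiv_eq_smul_deriv y
  rw [fderiv_eq_mul]
  refine ⟨fun hbij hzero ↦ one_ne_zero (hbij.injective ?_ : (1 : 𝕜) = 0), mulRight_bijective₀ _⟩
  simp only [hzero, mul_zero]

variable {E E' F F' : Type*}
  [NormedAddCommGroup E] [NormedSpace 𝕜 E] [NormedAddCommGroup E'] [NormedSpace 𝕜 E']
  [NormedAddCommGroup F] [NormedSpace 𝕜 F] [NormedAddCommGroup F'] [NormedSpace 𝕜 F']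

theorem differentiable_prodMap {f : E → F} {g : E' → F'}
    (hf : Differentiable 𝕜 f) (hg : Differentiable 𝕜 g) : Differentiable 𝕜 (Prod.map f g) :=
  fun p ↦ (hf p.1).prodMap p (hg p.2)

theorem bijective_fderiv_prodMap_iff {f : E → F} {g : E' → F'} {p : E × E'}
    (hf : DifferentiableAt 𝕜 f p.1) (hg : DifferentiableAt 𝕜 g p.2) :
    Bijective (fderiv 𝕜 (Prod.map f g) p) ↔
      Bijective (fderiv 𝕜 f p.1) ∧ Bijective (fderiv 𝕜 g p.2) := by
  rw [(hf.hasFDerivAt.prodMap p hg.hasFDerivAt).fderiv, ContinuousLinearMap.coe_prodMap',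
    Prod.map_bijective]

theorem bijective_fderiv_comp_continuousLinearEquiv_iff (L : E ≃L[𝕜] E') {f : E' → F} {x : E} :
    Bijective (fderiv 𝕜 (f ∘ L) x) ↔ Bijective (fderiv 𝕜 f (L x)) := by
  rw [L.comp_right_fderiv, ContinuousLinearMap.coe_comp]
  exact Bijective.of_comp_iff _ L.bijective

end BijectiveDerivative

/-- The conjugation-invariant quantity `(tr M)² / det M - 2` of a projective transformation
`[M] ∈ PGL₂(ℂ)` whose eigenvalues have ratio `e^{2πiw}`, as an entire function of `w`. -/
noncomputable def traceInvariant (w : ℂ) : ℂ :=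
  exp (2 * (Real.pi : ℂ) * I * w) + exp (-(2 * (Real.pi : ℂ) * I * w))

theorem traceInvariant_eq_two_mul_cos (w : ℂ) :
    traceInvariant w = 2 * cos (2 * Real.pi * w) := by
  rw [two_cos, traceInvariant]
  ring_nf

theorem hasDerivAt_traceInvariant (w : ℂ) :
    HasDerivAt traceInvariant (-(4 * Real.pi * sin (2 * Real.pi * w))) w := by
  rw [funext traceInvariant_eq_two_mul_cos]
  have hlin : HasDerivAt (fun z : ℂ ↦ 2 * Real.pi * z) (2 * Real.pi) w :=
    hasDerivAt_const_mul _
  exact (hlin.ccos.const_mul 2).congr_deriv (by ring)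

theorem differentiable_traceInvariant : Differentiable ℂ traceInvariant :=
  fun w ↦ (hasDerivAt_traceInvariant w).differentiableAt

theorem sin_two_pi_mul_eq_zero_iff {w : ℂ} :
    sin (2 * Real.pi * w) = 0 ↔ ∃ n : ℤ, 2 * w = n := by
  have hπ : (Real.pi : ℂ) ≠ 0 := ofReal_ne_zero.mpr Real.pi_ne_zero
  rw [sin_eq_zero_iff]
  refine exists_congr fun n ↦ ?_
  rw [mul_right_comm, mul_left_inj' hπ]

theorem deriv_traceInvariant_ne_zero_iff {w : ℂ} :
    deriv traceInvariant w ≠ 0 ↔ ∀ n : ℤ, 2 * w ≠ n := by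
  have hπ : (4 * Real.pi : ℂ) ≠ 0 :=
    mul_ne_zero (by norm_num) (ofReal_ne_zero.mpr Real.pi_ne_zero)
  rw [(hasDerivAt_traceInvariant w).deriv, neg_ne_zero, mul_ne_zero_iff_left hπ, ne_eq,
    sin_two_pi_mul_eq_zero_iff, not_exists]

/-- The linear automorphism `(α, β, γ) ↦ (γ, γ - α - β, α - β)` of the parameter space. Its
coordinates are, up to sign and integer shifts, the exponent differences of the hypergeometric
equation at `0`, `1` and `∞`. -/
noncomputable def exponentDifferences : (ℂ × ℂ × ℂ) ≃L[ℂ] (ℂ × ℂ × ℂ) :=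
  LinearEquiv.toContinuousLinearEquiv
    { toFun := fun p ↦ (p.2.2, p.2.2 - p.1 - p.2.1, p.1 - p.2.1)
      invFun := fun q ↦ ((q.1 - q.2.1 + q.2.2) / 2, (q.1 - q.2.1 - q.2.2) / 2, q.1)
      map_add' := fun p q ↦ by ext <;> simp only [Prod.fst_add, Prod.snd_add] <;> ring
      map_smul' := fun c p ↦ by
        ext <;> simp only [Prod.smul_fst, Prod.smul_snd, smul_eq_mul, RingHom.id_apply] <;> ring
      left_inv := fun p ↦ by ext <;> ring
      right_inv := fun q ↦ by ext <;> ring }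

theorem exponentDifferences_apply (p : ℂ × ℂ × ℂ) :
    exponentDifferences p = (p.2.2, p.2.2 - p.1 - p.2.1, p.1 - p.2.1) :=
  rfl

/-- The map `F = (f, g, h)` of invariants of the projectivized monodromy, one for each singular
point of the hypergeometric equation. -/
noncomputable def traceInvariants : ℂ × ℂ × ℂ → ℂ × ℂ × ℂ :=
  Prod.map traceInvariant (Prod.map traceInvariant traceInvariant) ∘ exponentDifferences

theorem differentiable_traceInvariants : Differentiable ℂ traceInvariants :=
  have hφ := differentiable_traceInvariant
  (differentiable_prodMap hφ (differentiable_prodMap hφ hφ)).comp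
    exponentDifferences.differentiable

theorem bijective_fderiv_traceInvariants_iff {p : ℂ × ℂ × ℂ} :
    Function.Bijective (fderiv ℂ traceInvariants p) ↔
      (∀ n : ℤ, 2 * p.2.2 ≠ (n : ℂ)) ∧
      (∀ n : ℤ, 2 * (p.2.2 - p.1 - p.2.1) ≠ (n : ℂ)) ∧
      (∀ n : ℤ, 2 * (p.1 - p.2.1) ≠ (n : ℂ)) := by
  have hφ := differentiable_traceInvariant
  rw [traceInvariants, bijective_fderiv_comp_continuousLinearEquiv_iff,
    bijective_fderiv_prodMap_iff (hφ _) (differentiable_prodMap hφ hφ _),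
    bijective_fderiv_prodMap_iff (hφ _) (hφ _)]
  simp only [bijective_fderiv_iff_deriv_ne_zero, deriv_traceInvariant_ne_zero_iff,
    exponentDifferences_apply]

/-- The monodromy trace invariants
`f(α,β,γ) = e^{2πiγ} + e^{-2πiγ}`, `g(α,β,γ) = e^{2πi(γ-α-β)} + e^{-2πi(γ-α-β)}`,
`h(α,β,γ) = e^{2πi(α-β)} + e^{-2πi(α-β)}` assemble into an everywhere
complex-differentiable map `F = (f,g,h) : ℂ³ → ℂ³` whose Fréchet derivative is a linear
isomorphism at every point where `2γ`, `2(γ-α-β)` and `2(α-β)` are not integers. -/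
theorem stmt0 :
    let f : ℂ × ℂ × ℂ → ℂ := fun p =>
      exp (2 * (Real.pi : ℂ) * I * p.2.2) + exp (-(2 * (Real.pi : ℂ) * I * p.2.2))
    let g : ℂ × ℂ × ℂ → ℂ := fun p =>
      exp (2 * (Real.pi : ℂ) * I * (p.2.2 - p.1 - p.2.1)) +
        exp (-(2 * (Real.pi : ℂ) * I * (p.2.2 - p.1 - p.2.1)))
    let h : ℂ × ℂ × ℂ → ℂ := fun p =>
      exp (2 * (Real.pi : ℂ) * I * (p.1 - p.2.1)) +
        exp (-(2 * (Real.pi : ℂ) * I * (p.1 - p.2.1)))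
    let F : ℂ × ℂ × ℂ → ℂ × ℂ × ℂ := fun p => (f p, g p, h p)
    Differentiable ℂ F ∧
      ∀ p : ℂ × ℂ × ℂ,
        (∀ n : ℤ, 2 * p.2.2 ≠ (n : ℂ)) →
        (∀ n : ℤ, 2 * (p.2.2 - p.1 - p.2.1) ≠ (n : ℂ)) →
        (∀ n : ℤ, 2 * (p.1 - p.2.1) ≠ (n : ℂ)) →
        Function.Bijective (fderiv ℂ F p) := by
  exact ⟨differentiable_traceInvariants,
    fun _ hγ hγαβ hαβ ↦ bijective_fderiv_traceInvariants_iff.mpr ⟨hγ, hγαβ, hαβ⟩⟩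
end

section
/- Let Ω ⊆ ℂ⁴ be an open set, with coordinates denoted (x, a, b, c), on which x ∉ {0,1}. Let w : Ω → ℂ be ℂ-analytic and nowhere vanishing, satisfying the partial differential equation ∂w/∂x = (a/x - b/(1-x))·w on Ω. Then each of the following four functions on Ω has identically vanishing partial derivative with respect to x (i.e., they are first integrals): (i) w_c/w; (ii) R = w_{aa}/w - (w_a)²/w²; (iii) S = w_{ab}/w - w_a·w_b/w²; (iv) T = w_{bb}/w - (w_b)²/w²; where subscripts denote partial derivatives with respect to the coordinates a, b, c. -/
/-- Partial derivative of a function on `ℂ⁴` (coordinates `(x,a,b,c)` indexed by `Fin 4`)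
in the `i`-th coordinate direction. -/
noncomputable def pd4 (i : Fin 4) (f : (Fin 4 → ℂ) → ℂ) (p : Fin 4 → ℂ) : ℂ :=
  fderiv ℂ f p (Pi.single i 1)

/-!
Second derivatives of `log w` do not depend on the order of differentiation, and neither do those
of the logarithmic derivatives `w_u / w`, so `∂_x` can be moved innermost, onto `log w` itself.
The equation then replaces `∂_x (log w)` by the coefficient `a / x - b / (1 - x)`. This is free of
`c` and affine in the parameters, which settles `w_c / w = ∂_c (log w)` and `R`, `S`, `T`, the
second parameter derivatives of `log w`.
-/

open Topology

section DirectionalDerivative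

variable {𝕜 E : Type*} [NontriviallyNormedField 𝕜] [NormedAddCommGroup E] [NormedSpace 𝕜 E]
  {f g : E → 𝕜} {p : E}

/-- The derivative `∂_v f` of a scalar function in the direction `v`, read off from the Fréchet
derivative (hence `0` where `f` is not differentiable); `pd4 i` is the case `v = Pi.single i 1`. -/
noncomputable def dirDeriv (v : E) (f : E → 𝕜) (p : E) : 𝕜 :=
  fderiv 𝕜 f p v

theorem eventuallyEq_dirDeriv (h : f =ᶠ[𝓝 p] g) (v : E) : dirDeriv v f =ᶠ[𝓝 p] dirDeriv v g :=
  h.fderiv.fun_comp (· v)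

theorem analyticAt_dirDeriv [CompleteSpace 𝕜] (hf : AnalyticAt 𝕜 f p) (v : E) :
    AnalyticAt 𝕜 (dirDeriv v f) p :=
  ((ContinuousLinearMap.apply 𝕜 𝕜 v).analyticAt _).comp hf.fderiv

theorem dirDeriv_dirDeriv (hf : DifferentiableAt 𝕜 (fderiv 𝕜 f) p) (u v : E) :
    dirDeriv u (dirDeriv v f) p = fderiv 𝕜 (fderiv 𝕜 f) p u v := by
  change fderiv 𝕜 (fun q => fderiv 𝕜 f q v) p u = _
  simp [fderiv_clm_apply hf (differentiableAt_const v)]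

theorem dirDeriv_comm [CompleteSpace 𝕜] (hf : AnalyticAt 𝕜 f p) (u v : E) :
    dirDeriv u (dirDeriv v f) p = dirDeriv v (dirDeriv u f) p := by
  have hf' : DifferentiableAt 𝕜 (fderiv 𝕜 f) p := hf.fderiv.differentiableAt
  rw [dirDeriv_dirDeriv hf', dirDeriv_dirDeriv hf']
  exact hf.contDiffAt.isSymmSndFDerivAt_of_omega u v

theorem dirDeriv_sub (hf : DifferentiableAt 𝕜 f p) (hg : DifferentiableAt 𝕜 g p) (v : E) :
    dirDeriv v (fun q => f q - g q) p = dirDeriv v f p - dirDeriv v g p := by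
  simp [dirDeriv, fderiv_fun_sub hf hg]

theorem dirDeriv_coord {ι : Type*} [Fintype ι] (u p : ι → 𝕜) (i : ι) :
    dirDeriv u (fun q : ι → 𝕜 => q i) p = u i := by
  simp [dirDeriv, (hasFDerivAt_apply i p).fderiv]

theorem differentiableAt_div (hf : DifferentiableAt 𝕜 f p) (hg : DifferentiableAt 𝕜 g p)
    (h0 : g p ≠ 0) : DifferentiableAt 𝕜 (fun q => f q / g q) p := by
  simpa only [div_eq_mul_inv] using hf.fun_mul (hg.fun_inv h0)

theorem dirDeriv_div (hf : DifferentiableAt 𝕜 f p) (hg : DifferentiableAt 𝕜 g p) (h0 : g p ≠ 0)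
    (v : E) :
    dirDeriv v (fun q => f q / g q) p =
      dirDeriv v f p / g p - dirDeriv v g p * f p / g p ^ 2 := by
  have hline : HasLineDerivAt 𝕜 (fun q => f q / g q) _ p v :=
    (hf.hasFDerivAt.hasLineDerivAt v).fun_div (hg.hasFDerivAt.hasLineDerivAt v) (by simpa using h0)
  rw [dirDeriv, ← (differentiableAt_div hf hg h0).lineDeriv_eq_fderiv, hline.lineDeriv]
  simp only [dirDeriv, zero_smul, add_zero]
  field_simp

theorem dirDeriv_div_of_dirDeriv_eq_zero (hf : DifferentiableAt 𝕜 f p)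
    (hg : DifferentiableAt 𝕜 g p) (h0 : g p ≠ 0) {v : E} (hv : dirDeriv v g p = 0) :
    dirDeriv v (fun q => f q / g q) p = dirDeriv v f p / g p := by
  simp [dirDeriv_div hf hg h0, hv]

/-- The logarithmic derivative `∂_v f / f`, standing for `∂_v (log f)` without the choice of a
branch of the logarithm. -/
noncomputable def logDirDeriv (v : E) (f : E → 𝕜) (p : E) : 𝕜 :=
  dirDeriv v f p / f p

variable [CompleteSpace 𝕜]

theorem analyticAt_logDirDeriv (hf : AnalyticAt 𝕜 f p) (h0 : f p ≠ 0) (v : E) :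
    AnalyticAt 𝕜 (logDirDeriv v f) p :=
  (analyticAt_dirDeriv hf v).fun_div hf h0

theorem dirDeriv_logDirDeriv (hf : AnalyticAt 𝕜 f p) (h0 : f p ≠ 0) (u v : E) :
    dirDeriv u (logDirDeriv v f) p =
      dirDeriv u (dirDeriv v f) p / f p - dirDeriv u f p * dirDeriv v f p / f p ^ 2 :=
  dirDeriv_div (analyticAt_dirDeriv hf v).differentiableAt hf.differentiableAt h0 u

theorem dirDeriv_logDirDeriv_comm (hf : AnalyticAt 𝕜 f p) (h0 : f p ≠ 0) (u v : E) :
    dirDeriv u (logDirDeriv v f) p = dirDeriv v (logDirDeriv u f) p := by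
  rw [dirDeriv_logDirDeriv hf h0, dirDeriv_logDirDeriv hf h0, dirDeriv_comm hf, mul_comm]

theorem dirDeriv_dirDeriv_logDirDeriv_rotate (hf : AnalyticAt 𝕜 f p) (h0 : f p ≠ 0) (e u v : E) :
    dirDeriv e (dirDeriv u (logDirDeriv v f)) p = dirDeriv u (dirDeriv v (logDirDeriv e f)) p := by
  have hcomm : dirDeriv e (logDirDeriv v f) =ᶠ[𝓝 p] dirDeriv v (logDirDeriv e f) := by
    filter_upwards [hf.eventually_analyticAt, hf.continuousAt.eventually_ne h0] with q hq hq0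
    exact dirDeriv_logDirDeriv_comm hq hq0 e v
  rw [dirDeriv_comm (analyticAt_logDirDeriv hf h0 v), (eventuallyEq_dirDeriv hcomm u).eq_of_nhds]

end DirectionalDerivative

section DeterminantEquation

variable {𝕜 : Type*} [NontriviallyNormedField 𝕜] {p u : Fin 4 → 𝕜}

theorem dirDeriv_div_sub_div {A B : (Fin 4 → 𝕜) → 𝕜} (hA : DifferentiableAt 𝕜 A p)
    (hB : DifferentiableAt 𝕜 B p) (h0 : p 0 ≠ 0) (h1 : p 0 ≠ 1) (hu : u 0 = 0) :
    dirDeriv u (fun q => A q / q 0 - B q / (1 - q 0)) p =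
      dirDeriv u A p / p 0 - dirDeriv u B p / (1 - p 0) := by
  have h1' : 1 - p 0 ≠ 0 := sub_ne_zero.mpr h1.symm
  have hx : DifferentiableAt 𝕜 (fun q : Fin 4 → 𝕜 => q 0) p := by fun_prop
  have hx' : DifferentiableAt 𝕜 (fun q : Fin 4 → 𝕜 => 1 - q 0) p := by fun_prop
  have hux : dirDeriv u (fun q : Fin 4 → 𝕜 => q 0) p = 0 := (dirDeriv_coord u p 0).trans hu
  have hux' : dirDeriv u (fun q : Fin 4 → 𝕜 => 1 - q 0) p = 0 := by
    rw [dirDeriv_sub (differentiableAt_const 1) hx, hux]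
    simp [dirDeriv]
  rw [dirDeriv_sub (differentiableAt_div hA hx h0) (differentiableAt_div hB hx' h1'),
    dirDeriv_div_of_dirDeriv_eq_zero hA hx h0 hux,
    dirDeriv_div_of_dirDeriv_eq_zero hB hx' h1' hux']

/-- The coefficient `a / x - b / (1 - x)` of the determinant equation of the hypergeometric system,
as a function of `(x, a, b, c)`. -/
def determinantCoeff (q : Fin 4 → 𝕜) : 𝕜 :=
  q 1 / q 0 - q 2 / (1 - q 0)

theorem dirDeriv_determinantCoeff (h0 : p 0 ≠ 0) (h1 : p 0 ≠ 1) (hu : u 0 = 0) :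
    dirDeriv u determinantCoeff p = u 1 / p 0 - u 2 / (1 - p 0) := by
  have h := dirDeriv_div_sub_div (differentiableAt_apply 1 p) (differentiableAt_apply 2 p) h0 h1 hu
  rwa [dirDeriv_coord, dirDeriv_coord] at h

theorem dirDeriv_dirDeriv_determinantCoeff (h0 : p 0 ≠ 0) (h1 : p 0 ≠ 1) (hu : u 0 = 0)
    {v : Fin 4 → 𝕜} (hv : v 0 = 0) :
    dirDeriv u (dirDeriv v determinantCoeff) p = 0 := by
  have hfst : dirDeriv v determinantCoeff =ᶠ[𝓝 p] fun q => v 1 / q 0 - v 2 / (1 - q 0) := by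
    have hx : ContinuousAt (fun q : Fin 4 → 𝕜 => q 0) p := continuousAt_apply 0 p
    filter_upwards [hx.eventually_ne h0, hx.eventually_ne h1] with q hq0 hq1
    exact dirDeriv_determinantCoeff hq0 hq1 hv
  rw [(eventuallyEq_dirDeriv hfst u).eq_of_nhds,
    dirDeriv_div_sub_div (differentiableAt_const _) (differentiableAt_const _) h0 h1 hu]
  simp [dirDeriv]

end DeterminantEquation

theorem stmt4_general {𝕜 : Type*} [NontriviallyNormedField 𝕜] [CompleteSpace 𝕜]
    {Ω : Set (Fin 4 → 𝕜)} (hΩ : IsOpen Ω) (h01 : ∀ p ∈ Ω, p 0 ≠ 0 ∧ p 0 ≠ 1)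
    {w : (Fin 4 → 𝕜) → 𝕜} (hw : AnalyticOnNhd 𝕜 w Ω) (hnv : ∀ p ∈ Ω, w p ≠ 0)
    (hpde : ∀ p ∈ Ω, dirDeriv (Pi.single 0 1) w p = (p 1 / p 0 - p 2 / (1 - p 0)) * w p)
    {p : Fin 4 → 𝕜} (hp : p ∈ Ω) :
    (∀ u : Fin 4 → 𝕜, u 0 = 0 → u 1 = 0 → u 2 = 0 →
      dirDeriv (Pi.single 0 1) (fun q => dirDeriv u w q / w q) p = 0) ∧
    (∀ u v : Fin 4 → 𝕜, u 0 = 0 → v 0 = 0 →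
      dirDeriv (Pi.single 0 1) (fun q => dirDeriv u (dirDeriv v w) q / w q -
        dirDeriv u w q * dirDeriv v w q / w q ^ 2) p = 0) := by
  obtain ⟨h0, h1⟩ := h01 p hp
  have hx : logDirDeriv (Pi.single 0 1) w =ᶠ[𝓝 p] determinantCoeff := by
    filter_upwards [hΩ.mem_nhds hp] with q hq
    exact (div_eq_iff (hnv q hq)).mpr (hpde q hq)
  refine ⟨fun u hu0 hu1 hu2 => ?_, fun u v hu hv => ?_⟩
  · calc dirDeriv (Pi.single 0 1) (logDirDeriv u w) p
        = dirDeriv u (logDirDeriv (Pi.single 0 1) w) p :=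
          dirDeriv_logDirDeriv_comm (hw p hp) (hnv p hp) _ u
      _ = dirDeriv u determinantCoeff p := (eventuallyEq_dirDeriv hx u).eq_of_nhds
      _ = 0 := by simp [dirDeriv_determinantCoeff h0 h1 hu0, hu1, hu2]
  · have hlog : (fun q => dirDeriv u (dirDeriv v w) q / w q -
        dirDeriv u w q * dirDeriv v w q / w q ^ 2) =ᶠ[𝓝 p] dirDeriv u (logDirDeriv v w) := by
      filter_upwards [hΩ.mem_nhds hp] with q hq
      exact (dirDeriv_logDirDeriv (hw q hq) (hnv q hq) u v).symm
    rw [(eventuallyEq_dirDeriv hlog _).eq_of_nhds,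
      dirDeriv_dirDeriv_logDirDeriv_rotate (hw p hp) (hnv p hp),
      (eventuallyEq_dirDeriv (eventuallyEq_dirDeriv hx v) u).eq_of_nhds,
      dirDeriv_dirDeriv_determinantCoeff h0 h1 hu hv]

/-- If `w` is analytic and nowhere vanishing on an open set
`Ω ⊆ ℂ⁴` (coordinates `(x,a,b,c)`, with `x ∉ {0,1}` on `Ω`) and satisfies
`∂w/∂x = (a/x - b/(1-x))·w`, then `w_c/w`, `R = w_{aa}/w - w_a²/w²`,
`S = w_{ab}/w - w_a w_b/w²` and `T = w_{bb}/w - w_b²/w²` are first integrals: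
their partial derivatives with respect to `x` vanish identically on `Ω`. -/
theorem stmt4 (Ω : Set (Fin 4 → ℂ)) (hΩ : IsOpen Ω)
    (h01 : ∀ p ∈ Ω, p 0 ≠ 0 ∧ p 0 ≠ 1)
    (w : (Fin 4 → ℂ) → ℂ) (hw : AnalyticOnNhd ℂ w Ω)
    (hnv : ∀ p ∈ Ω, w p ≠ 0)
    (hpde : ∀ p ∈ Ω, pd4 0 w p = (p 1 / p 0 - p 2 / (1 - p 0)) * w p) :
    (∀ p ∈ Ω, pd4 0 (fun q => pd4 3 w q / w q) p = 0) ∧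
    (∀ p ∈ Ω, pd4 0 (fun q => pd4 1 (pd4 1 w) q / w q - (pd4 1 w q) ^ 2 / (w q) ^ 2) p = 0) ∧
    (∀ p ∈ Ω, pd4 0 (fun q => pd4 1 (pd4 2 w) q / w q - pd4 1 w q * pd4 2 w q / (w q) ^ 2) p = 0) ∧
    (∀ p ∈ Ω, pd4 0 (fun q => pd4 2 (pd4 2 w) q / w q - (pd4 2 w q) ^ 2 / (w q) ^ 2) p = 0) := by
  have hgen := fun p hp => stmt4_general hΩ h01 hw hnv hpde (p := p) hp
  simp only [pow_two (pd4 _ w _)]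
  exact ⟨fun p hp => (hgen p hp).1 (Pi.single 3 1) rfl rfl rfl,
    fun p hp => (hgen p hp).2 (Pi.single 1 1) (Pi.single 1 1) rfl rfl,
    fun p hp => (hgen p hp).2 (Pi.single 1 1) (Pi.single 2 1) rfl rfl,
    fun p hp => (hgen p hp).2 (Pi.single 2 1) (Pi.single 2 1) rfl rfl⟩
end

section
/- Let n ≥ 1 and k ≥ 1, and let Ω ⊆ ℂᵏ be an open set of points a = (a₁,…,a_k) with pairwise distinct coordinates. Let A₁,…,A_k : Ω → Matrix (Fin n) (Fin n) ℂ be ℂ-analytic maps satisfying the Schlesinger equations: for all i ≠ j, ∂A_i/∂a_j = [A_i, A_j]/(a_i - a_j), and for all i, ∂A_i/∂a_i = -∑_{j≠i} [A_i, A_j]/(a_i - a_j), where [X,Y] = XY - YX. For x ∈ ℂ with x ≠ a_i for all i, set B(x,a) = ∑_i A_i(a)/(x - a_i) and C_i(x,a) = -A_i(a)/(x - a_i). Then the zero-curvature (Frobenius integrability) conditions hold on the open set { (x,a) : a ∈ Ω, x ≠ a_i ∀i }: for every i, ∂B/∂a_i - ∂C_i/∂x = C_i·B - B·C_i, and for every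 i, j, ∂C_i/∂a_j - ∂C_j/∂a_i = C_j·C_i - C_i·C_j. -/
open Matrix

attribute [local instance] Matrix.normedAddCommGroup Matrix.normedSpace

/-!
The off-diagonal Schlesinger equations give `∂Cᵢ/∂aⱼ - ∂Cⱼ/∂aᵢ = [Cⱼ, Cᵢ]` by the partial fraction
decomposition of `1 / ((x - aᵢ) (x - aⱼ))`. Modulo these, the diagonal ones say precisely that each
`Aᵢ` is infinitesimally invariant under simultaneous translation of all the `aⱼ`. Since `x - aᵢ` is
translation invariant too, so is each `Cᵢ`, that is, `∂Cᵢ/∂x = -∑ⱼ ∂Cᵢ/∂aⱼ`. As `B = -∑ⱼ Cⱼ`,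
summing the first family of identities over `j` yields `∂B/∂aᵢ - ∂Cᵢ/∂x = [Cᵢ, B]`.
-/

theorem inv_sub_inv_mul_inv_sub {K : Type*} [Field K] {x a b : K} (ha : x ≠ a) (hb : x ≠ b)
    (hab : a ≠ b) : ((x - a)⁻¹ - (x - b)⁻¹) * (a - b)⁻¹ = (x - a)⁻¹ * (x - b)⁻¹ := by
  rw [inv_sub_inv' (sub_ne_zero.mpr ha) (sub_ne_zero.mpr hb), sub_sub_sub_cancel_left,
    mul_right_comm, mul_inv_cancel_right₀ (sub_ne_zero.mpr hab)]

theorem map_one_one_eq_add_sum {ι R M F : Type*} [Fintype ι] [DecidableEq ι]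
    [AddCommMonoidWithOne R] [AddCommMonoid M] [FunLike F (R × (ι → R)) M]
    [AddMonoidHomClass F (R × (ι → R)) M] (L : F) :
    L (1, 1) = L (1, 0) + ∑ j, L (0, Pi.single j 1) := by
  have hone : ((1, 1) : R × (ι → R)) = (1, 0) + ∑ j, (0, Pi.single j 1) := by
    ext <;> simp [Prod.fst_sum, Prod.snd_sum, Finset.univ_sum_single]
  rw [hone, map_add, map_sum]

theorem hasFDerivAt_inv_smul {𝕜 V E : Type*} [NontriviallyNormedField 𝕜]
    [NormedAddCommGroup V] [NormedSpace 𝕜 V] [NormedAddCommGroup E] [NormedSpace 𝕜 E]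
    {f : V → 𝕜} {f' : V →L[𝕜] 𝕜} {g : V → E} {g' : V →L[𝕜] E} {x : V}
    (hf : HasFDerivAt f f' x) (hg : HasFDerivAt g g' x) (hx : f x ≠ 0) :
    HasFDerivAt (fun y => (f y)⁻¹ • g y)
      ((f x)⁻¹ • g' - ((f x ^ 2)⁻¹ • f').smulRight (g x)) x := by
  refine (((hasDerivAt_inv hx).comp_hasFDerivAt x hf).smul hg).congr_fderiv ?_
  ext v
  simp [sub_eq_add_neg]

section FuchsianSystem

open Finset

variable {𝕜 ι E : Type*} [NontriviallyNormedField 𝕜]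
  [NormedAddCommGroup E] [NormedSpace 𝕜 E]

/-- The linear form `(x, a) ↦ x - aᵢ`, which vanishes on the polar divisor of
`Aᵢ(a) / (x - aᵢ)`. -/
def subPole (i : ι) : 𝕜 × (ι → 𝕜) →L[𝕜] 𝕜 :=
  .fst 𝕜 𝕜 (ι → 𝕜) - (ContinuousLinearMap.proj i).comp (.snd 𝕜 𝕜 (ι → 𝕜))

/-- The coefficient `Cᵢ(x, a) = -Aᵢ(a) / (x - aᵢ)` that governs the deformation of a Fuchsian system
along its `i`-th pole. -/
def deformationCoeff (A : ι → (ι → 𝕜) → E) (i : ι) (p : 𝕜 × (ι → 𝕜)) : E :=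
  -((p.1 - p.2 i)⁻¹ • A i p.2)

theorem hasFDerivAt_deformationCoeff [Finite ι] {A : ι → (ι → 𝕜) → E} {i : ι} {p : 𝕜 × (ι → 𝕜)}
    (hA : DifferentiableAt 𝕜 (A i) p.2) (hp : p.1 ≠ p.2 i) :
    HasFDerivAt (deformationCoeff A i)
      (-((p.1 - p.2 i)⁻¹ • (fderiv 𝕜 (A i) p.2).comp (.snd 𝕜 𝕜 (ι → 𝕜)) -
        (((p.1 - p.2 i) ^ 2)⁻¹ • subPole i).smulRight (A i p.2))) p := by
  cases nonempty_fintype ι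
  have hres : HasFDerivAt (fun q : 𝕜 × (ι → 𝕜) => A i q.2) _ p :=
    hA.hasFDerivAt.comp p hasFDerivAt_snd
  exact (hasFDerivAt_inv_smul (subPole i).hasFDerivAt hres (sub_ne_zero.mpr hp)).neg

theorem fderiv_deformationCoeff_apply [Finite ι] {A : ι → (ι → 𝕜) → E} {i : ι} {p : 𝕜 × (ι → 𝕜)}
    (hA : DifferentiableAt 𝕜 (A i) p.2) (hp : p.1 ≠ p.2 i) (s : 𝕜) (v : ι → 𝕜) :
    fderiv 𝕜 (deformationCoeff A i) p (s, v) =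
      (((p.1 - p.2 i) ^ 2)⁻¹ * (s - v i)) • A i p.2 -
        (p.1 - p.2 i)⁻¹ • fderiv 𝕜 (A i) p.2 v := by
  rw [(hasFDerivAt_deformationCoeff hA hp).fderiv]
  simp [subPole]

/-- The zero-curvature conditions at the point `p = (x, a)`, that is, Frobenius integrability of the
linear system `∂U/∂x = B U`, `∂U/∂aᵢ = Cᵢ U`. -/
structure IsFlatAt [DecidableEq ι] (bracket : E →ₗ[𝕜] E →ₗ[𝕜] E) (B : 𝕜 × (ι → 𝕜) → E)
    (C : ι → 𝕜 × (ι → 𝕜) → E) (p : 𝕜 × (ι → 𝕜)) : Prop where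
  fderiv_single_sub_fderiv_fst : ∀ i,
    fderiv 𝕜 B p (0, Pi.single i 1) - fderiv 𝕜 (C i) p (1, 0) = bracket (C i p) (B p)
  fderiv_single_sub_fderiv_single : ∀ i j,
    fderiv 𝕜 (C i) p (0, Pi.single j 1) - fderiv 𝕜 (C j) p (0, Pi.single i 1) =
      bracket (C j p) (C i p)

variable [Fintype ι]

/-- The coefficient `B(x, a) = ∑ᵢ Aᵢ(a) / (x - aᵢ)` of the Fuchsian system with poles `aᵢ` and
residues `Aᵢ(a)`. -/
def fuchsianCoeff (A : ι → (ι → 𝕜) → E) (p : 𝕜 × (ι → 𝕜)) : E :=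
  ∑ i, (p.1 - p.2 i)⁻¹ • A i p.2

theorem fuchsianCoeff_eq_neg_sum_deformationCoeff (A : ι → (ι → 𝕜) → E) :
    fuchsianCoeff A = -∑ i, deformationCoeff A i := by
  ext p
  simp [fuchsianCoeff, deformationCoeff]

variable [DecidableEq ι]

/-- The Schlesinger system at the point `a`, for residues with values in a normed space `E` carrying
a bilinear bracket; for matrices the bracket is the commutator. The bracket is an argument because a
`LieRing` instance would put a second additive group structure on `E`. -/
structure IsSchlesingerAt (bracket : E →ₗ[𝕜] E →ₗ[𝕜] E) (A : ι → (ι → 𝕜) → E) (a : ι → 𝕜) :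
    Prop where
  differentiableAt : ∀ i, DifferentiableAt 𝕜 (A i) a
  fderiv_single_of_ne : ∀ i j, i ≠ j →
    fderiv 𝕜 (A i) a (Pi.single j 1) = (a i - a j)⁻¹ • bracket (A i a) (A j a)
  fderiv_single_self : ∀ i,
    fderiv 𝕜 (A i) a (Pi.single i 1) = -∑ j ∈ univ.erase i, (a i - a j)⁻¹ • bracket (A i a) (A j a)

variable {bracket : E →ₗ[𝕜] E →ₗ[𝕜] E} {A : ι → (ι → 𝕜) → E}

theorem isFlatAt_neg_sum {C : ι → 𝕜 × (ι → 𝕜) → E} {p : 𝕜 × (ι → 𝕜)}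
    (hC : ∀ i, DifferentiableAt 𝕜 (C i) p) (htrans : ∀ i, fderiv 𝕜 (C i) p (1, 1) = 0)
    (hcurl : ∀ i j, fderiv 𝕜 (C i) p (0, Pi.single j 1) - fderiv 𝕜 (C j) p (0, Pi.single i 1) =
      bracket (C j p) (C i p)) :
    IsFlatAt bracket (-∑ j, C j) C p := by
  refine ⟨fun i => ?_, hcurl⟩
  have hx : fderiv 𝕜 (C i) p (1, 0) = -∑ j, fderiv 𝕜 (C i) p (0, Pi.single j 1) :=
    eq_neg_of_add_eq_zero_left ((map_one_one_eq_add_sum _).symm.trans (htrans i))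
  have hB : fderiv 𝕜 (-∑ j, C j) p = -∑ j, fderiv 𝕜 (C j) p :=
    (HasFDerivAt.sum fun j _ => (hC j).hasFDerivAt).neg.fderiv
  calc
    fderiv 𝕜 (-∑ j, C j) p (0, Pi.single i 1) - fderiv 𝕜 (C i) p (1, 0)
      = -∑ j, (fderiv 𝕜 (C j) p (0, Pi.single i 1) - fderiv 𝕜 (C i) p (0, Pi.single j 1)) := by
        rw [hB, hx, sum_sub_distrib, _root_.neg_apply, _root_.sum_apply]
        abel
    _ = -∑ j, bracket (C i p) (C j p) := by simp only [hcurl]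
    _ = bracket (C i p) ((-∑ j, C j) p) := by
        rw [Pi.neg_apply, Finset.sum_apply, map_neg, map_sum]

namespace IsSchlesingerAt

theorem fderiv_one {a : ι → 𝕜} (hA : IsSchlesingerAt bracket A a) (i : ι) :
    fderiv 𝕜 (A i) a 1 = 0 := by
  have hoff : ∀ j ∈ univ.erase i, fderiv 𝕜 (A i) a (Pi.single j 1) =
      (a i - a j)⁻¹ • bracket (A i a) (A j a) :=
    fun j hj => hA.fderiv_single_of_ne i j (ne_of_mem_erase hj).symm
  calc
    fderiv 𝕜 (A i) a 1 = ∑ j, fderiv 𝕜 (A i) a (Pi.single j 1) := by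
      rw [← map_sum]
      exact congrArg _ (univ_sum_single 1).symm
    _ = 0 := by
      rw [← add_sum_erase _ _ (mem_univ i), sum_congr rfl hoff, hA.fderiv_single_self,
        neg_add_cancel]

theorem fderiv_deformationCoeff_one_one {p : 𝕜 × (ι → 𝕜)} (hA : IsSchlesingerAt bracket A p.2)
    {i : ι} (hp : p.1 ≠ p.2 i) : fderiv 𝕜 (deformationCoeff A i) p (1, 1) = 0 := by
  rw [fderiv_deformationCoeff_apply (hA.differentiableAt i) hp, hA.fderiv_one]
  simp

theorem fderiv_deformationCoeff_single_of_ne {p : 𝕜 × (ι → 𝕜)}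
    (hA : IsSchlesingerAt bracket A p.2) {i j : ι} (hij : i ≠ j) (hp : p.1 ≠ p.2 i) :
    fderiv 𝕜 (deformationCoeff A i) p (0, Pi.single j 1) =
      -((p.1 - p.2 i)⁻¹ * (p.2 i - p.2 j)⁻¹) • bracket (A i p.2) (A j p.2) := by
  rw [fderiv_deformationCoeff_apply (hA.differentiableAt i) hp, hA.fderiv_single_of_ne i j hij,
    Pi.single_eq_of_ne hij]
  simp [smul_smul]

theorem fderiv_deformationCoeff_sub_fderiv_deformationCoeff {p : 𝕜 × (ι → 𝕜)}
    (hA : IsSchlesingerAt bracket A p.2) (hbr : bracket.IsAlt) (hinj : Function.Injective p.2)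
    (hp : ∀ i, p.1 ≠ p.2 i) (i j : ι) :
    fderiv 𝕜 (deformationCoeff A i) p (0, Pi.single j 1) -
        fderiv 𝕜 (deformationCoeff A j) p (0, Pi.single i 1) =
      bracket (deformationCoeff A j p) (deformationCoeff A i p) := by
  rcases eq_or_ne i j with rfl | hij
  · rw [sub_self, hbr]
  calc
    _ = -(((p.1 - p.2 i)⁻¹ - (p.1 - p.2 j)⁻¹) * (p.2 i - p.2 j)⁻¹) •
          bracket (A i p.2) (A j p.2) := by
        rw [hA.fderiv_deformationCoeff_single_of_ne hij (hp i),
          hA.fderiv_deformationCoeff_single_of_ne hij.symm (hp j), ← hbr.neg (A i p.2),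
          ← neg_sub (p.2 i) (p.2 j), inv_neg]
        module
    _ = -((p.1 - p.2 i)⁻¹ * (p.1 - p.2 j)⁻¹) • bracket (A i p.2) (A j p.2) := by
        rw [inv_sub_inv_mul_inv_sub (hp i) (hp j) (hinj.ne hij)]
    _ = bracket (deformationCoeff A j p) (deformationCoeff A i p) := by
        simp only [deformationCoeff, map_neg, map_smul, LinearMap.neg_apply, LinearMap.smul_apply,
          ← hbr.neg (A i p.2)]
        module

end IsSchlesingerAt

theorem stmt5_general (hbr : bracket.IsAlt) {p : 𝕜 × (ι → 𝕜)}
    (hA : IsSchlesingerAt bracket A p.2) (hinj : Function.Injective p.2)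
    (hp : ∀ i, p.1 ≠ p.2 i) :
    IsFlatAt bracket (fuchsianCoeff A) (deformationCoeff A) p := by
  rw [fuchsianCoeff_eq_neg_sum_deformationCoeff]
  exact isFlatAt_neg_sum
    (fun i => (hasFDerivAt_deformationCoeff (hA.differentiableAt i) (hp i)).differentiableAt)
    (fun i => hA.fderiv_deformationCoeff_one_one (hp i))
    (hA.fderiv_deformationCoeff_sub_fderiv_deformationCoeff hbr hinj hp)

end FuchsianSystem

/-- If the matrices `A₁,…,A_k` satisfy the Schlesinger equations on an open
set `Ω` of pairwise-distinct parameters `(a₁,…,a_k)`, then the connection matrices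
`B(x,a) = ∑ᵢ Aᵢ(a)/(x-aᵢ)` and `Cᵢ(x,a) = -Aᵢ(a)/(x-aᵢ)` satisfy the zero-curvature
(Frobenius integrability) conditions
`∂B/∂aᵢ - ∂Cᵢ/∂x = CᵢB - BCᵢ` and `∂Cᵢ/∂aⱼ - ∂Cⱼ/∂aᵢ = CⱼCᵢ - CᵢCⱼ`. -/
theorem stmt5 (n k : ℕ) (hn : 1 ≤ n) (hk : 1 ≤ k)
    (Ω : Set (Fin k → ℂ)) (hΩ : IsOpen Ω)
    (hdist : ∀ a ∈ Ω, ∀ i j : Fin k, i ≠ j → a i ≠ a j)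
    (A : Fin k → (Fin k → ℂ) → Matrix (Fin n) (Fin n) ℂ)
    (hA : ∀ i, AnalyticOnNhd ℂ (A i) Ω)
    (hSch₁ : ∀ a ∈ Ω, ∀ i j : Fin k, i ≠ j →
      fderiv ℂ (A i) a (Pi.single j 1) =
        (a i - a j)⁻¹ • (A i a * A j a - A j a * A i a))
    (hSch₂ : ∀ a ∈ Ω, ∀ i : Fin k,
      fderiv ℂ (A i) a (Pi.single i 1) =
        -∑ j ∈ Finset.univ.erase i, (a i - a j)⁻¹ • (A i a * A j a - A j a * A i a))
    (B : ℂ × (Fin k → ℂ) → Matrix (Fin n) (Fin n) ℂ)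
    (hB : ∀ p : ℂ × (Fin k → ℂ), B p = ∑ i, (p.1 - p.2 i)⁻¹ • A i p.2)
    (C : Fin k → ℂ × (Fin k → ℂ) → Matrix (Fin n) (Fin n) ℂ)
    (hC : ∀ i, ∀ p : ℂ × (Fin k → ℂ), C i p = -((p.1 - p.2 i)⁻¹ • A i p.2)) :
    ∀ p : ℂ × (Fin k → ℂ), p.2 ∈ Ω → (∀ i, p.1 ≠ p.2 i) →
      (∀ i, fderiv ℂ B p (0, Pi.single i 1) - fderiv ℂ (C i) p (1, 0) =
        C i p * B p - B p * C i p) ∧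
      (∀ i j, fderiv ℂ (C i) p (0, Pi.single j 1) - fderiv ℂ (C j) p (0, Pi.single i 1) =
        C j p * C i p - C i p * C j p) := by
  obtain rfl : B = fuchsianCoeff A := funext hB
  obtain rfl : C = deformationCoeff A := funext fun i => funext (hC i)
  intro p hp hx
  let commutator := LinearMap.mul ℂ (Matrix (Fin n) (Fin n) ℂ) - (LinearMap.mul ℂ _).flip
  have hA' : IsSchlesingerAt commutator A p.2 :=
    ⟨fun i => (hA i p.2 hp).differentiableAt, hSch₁ p.2 hp, hSch₂ p.2 hp⟩
  have hinj : Function.Injective p.2 := fun i j => not_imp_not.mp (hdist p.2 hp i j)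
  have hflat := stmt5_general (fun M => sub_self (M * M)) hA' hinj hx
  exact ⟨hflat.fderiv_single_sub_fderiv_fst, hflat.fderiv_single_sub_fderiv_single⟩
end

section
/- Let a, b ∈ ℂ and let D = ℂ \ ((-∞,0] ∪ [1,∞)) be the doubly slit plane (the set of z ∈ ℂ such that z is not a real number ≤ 0 and z is not a real number ≥ 1). Set w₀(x) = exp(a·Log(x) + b·Log(1-x)) using principal branches of the logarithm, and let Φ(x) be the 3×3 matrix with rows (w₀(x), 0, 0), (Log(x)·w₀(x), w₀(x), 0), (Log(1-x)·w₀(x), 0, w₀(x)). Then Φ is differentiable on D, satisfies Φ'(x) = A(x)·Φ(x) for all x ∈ D, where A(x) is the 3×3 matrix with rows (a/x - b/(1-x), 0, 0), (1/x, a/x - b/(1-x), 0), (-1/(1-x), 0, a/x - b/(1-x)), and det Φ(x) = w₀(x)³ ≠ 0 for all x ∈ D. -/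
open Complex Matrix

attribute [local instance] Matrix.normedAddCommGroup Matrix.normedSpace

/-!
A transvection `1 + v φᵀ` with `φ ⬝ v = 0` has determinant `1`, and since `(v' φᵀ)(v φᵀ) = 0` its
derivative `v' φᵀ` is also `v' φᵀ` times the transvection itself. The matrix `Φ` is the transvection
with `φ = (1, 0, 0)` and `v = (0, Log x, Log (1 - x))`, multiplied by the scalar solution `w₀`
of `w' = (a / x - b / (1 - x)) w`.
-/

section Transvection

variable {n : Type*} [Fintype n] [DecidableEq n]

theorem det_one_add_vecMulVec {R : Type*} [CommRing R] (v φ : n → R) :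
    (1 + vecMulVec v φ).det = 1 + φ ⬝ᵥ v := by
  rw [vecMulVec_eq Unit, det_one_add_replicateCol_mul_replicateRow]

theorem det_smul_one_add_vecMulVec {R : Type*} [CommRing R] {v φ : n → R} (w : R)
    (hφ : φ ⬝ᵥ v = 0) : (w • (1 + vecMulVec v φ)).det = w ^ Fintype.card n := by
  rw [det_smul, det_one_add_vecMulVec, hφ, add_zero, mul_one]

variable {𝕜 : Type*} [NontriviallyNormedField 𝕜] {x : 𝕜}

theorem hasDerivAt_one_add_vecMulVec {v : 𝕜 → n → 𝕜} {v' φ : n → 𝕜} (hv : HasDerivAt v v' x)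
    (hφ : φ ⬝ᵥ v x = 0) :
    HasDerivAt (fun z => 1 + vecMulVec (v z) φ)
      (vecMulVec v' φ * (1 + vecMulVec (v x) φ)) x := by
  have hmul : vecMulVec v' φ * (1 + vecMulVec (v x) φ) = vecMulVec v' φ := by
    rw [mul_add, mul_one, vecMulVec_mul_vecMulVec, hφ, zero_smul, vecMulVec_zero, add_zero]
  rw [hmul]
  refine HasDerivAt.const_add 1 ?_
  exact hasDerivAt_pi.2 fun i => hasDerivAt_pi.2 fun j => (hasDerivAt_pi.1 hv i).mul_const (φ j)

theorem hasDerivAt_smul_matrix {w : 𝕜 → 𝕜} {h : 𝕜} {U : 𝕜 → Matrix n n 𝕜} {N : Matrix n n 𝕜}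
    (hw : HasDerivAt w (h * w x) x) (hU : HasDerivAt U (N * U x) x) :
    HasDerivAt (fun z => w z • U z) ((h • 1 + N) * (w x • U x)) x := by
  refine (hw.fun_smul hU).congr_deriv ?_
  rw [add_mul, smul_one_mul, smul_smul, mul_smul_comm, add_comm]

end Transvection

theorem smul_one_add_vecMulVec_fin_three {R : Type*} [Semiring R] (c p q : R) :
    c • (1 : Matrix (Fin 3) (Fin 3) R) + vecMulVec ![0, p, q] ![1, 0, 0] =
      !![c, 0, 0; p, c, 0; q, 0, c] := by
  ext i j
  fin_cases i <;> fin_cases j <;> simp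

section DoublySlitPlane

theorem mem_slitPlane_iff_not_exists_ofReal_nonpos {z : ℂ} :
    z ∈ slitPlane ↔ ¬∃ r : ℝ, r ≤ 0 ∧ z = r := by
  rw [mem_slitPlane_iff_not_le_zero, nonpos_iff, not_iff_not]
  exact ⟨fun ⟨hre, him⟩ => ⟨z.re, hre, Complex.ext rfl him⟩,
    by rintro ⟨r, hr, rfl⟩; simpa using hr⟩

theorem one_sub_mem_slitPlane_iff_not_exists_ofReal_one_le {z : ℂ} :
    1 - z ∈ slitPlane ↔ ¬∃ r : ℝ, 1 ≤ r ∧ z = r := by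
  rw [mem_slitPlane_iff_not_exists_ofReal_nonpos, not_iff_not,
    (Equiv.subLeft (1 : ℝ)).exists_congr_left]
  simp [neg_add_eq_sub]

variable {x : ℂ}

theorem hasDerivAt_log_one_sub (hx : 1 - x ∈ slitPlane) :
    HasDerivAt (fun z => log (1 - z)) (-(1 / (1 - x))) x := by
  simpa only [neg_div] using ((hasDerivAt_id' x).const_sub 1).clog hx

theorem hasDerivAt_exp_mul_log_add_mul_log_one_sub (a b : ℂ) (hx : x ∈ slitPlane)
    (hx' : 1 - x ∈ slitPlane) :
    HasDerivAt (fun z => exp (a * log z + b * log (1 - z)))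
      ((a / x - b / (1 - x)) * exp (a * log x + b * log (1 - x))) x := by
  have hlog : HasDerivAt (fun z => a * log z + b * log (1 - z)) (a / x - b / (1 - x)) x :=
    (((hasDerivAt_log hx).const_mul a).add
      ((hasDerivAt_log_one_sub hx').const_mul b)).congr_deriv (by ring)
  simpa only [mul_comm] using hlog.cexp

end DoublySlitPlane

/-- On the doubly slit plane `D = ℂ \ ((-∞,0] ∪ [1,∞))`, with
`w₀(x) = exp(a·Log x + b·Log(1-x))`, the matrix
`Φ(x) = !![w₀,0,0; Log(x)w₀, w₀, 0; Log(1-x)w₀, 0, w₀]` is differentiable, solves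
`Φ' = A·Φ` with the displayed lower-triangular `A`, and has determinant `w₀³ ≠ 0`. -/
theorem stmt6 (a b : ℂ) :
    let D : Set ℂ := {z | (¬∃ r : ℝ, r ≤ 0 ∧ z = (r : ℂ)) ∧ ¬∃ r : ℝ, 1 ≤ r ∧ z = (r : ℂ)}
    let w₀ : ℂ → ℂ := fun x => exp (a * log x + b * log (1 - x))
    let Φ : ℂ → Matrix (Fin 3) (Fin 3) ℂ := fun x =>
      !![w₀ x, 0, 0; log x * w₀ x, w₀ x, 0; log (1 - x) * w₀ x, 0, w₀ x]
    let A : ℂ → Matrix (Fin 3) (Fin 3) ℂ := fun x =>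
      !![a / x - b / (1 - x), 0, 0;
         1 / x, a / x - b / (1 - x), 0;
         -(1 / (1 - x)), 0, a / x - b / (1 - x)]
    ∀ x ∈ D, HasDerivAt Φ (A x * Φ x) x ∧ (Φ x).det = (w₀ x) ^ 3 ∧ w₀ x ≠ 0 := by
  intro D w₀ Φ A x ⟨h0, h1⟩
  have hx : x ∈ slitPlane := mem_slitPlane_iff_not_exists_ofReal_nonpos.2 h0
  have hx' : 1 - x ∈ slitPlane := one_sub_mem_slitPlane_iff_not_exists_ofReal_one_le.2 h1
  let v : ℂ → Fin 3 → ℂ := fun z => ![0, log z, log (1 - z)]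
  have hΦ : Φ = fun z => w₀ z • (1 + vecMulVec (v z) ![1, 0, 0]) := by
    funext z
    simp only [Φ, v, smul_add, ← smul_vecMulVec, smul_cons, smul_empty, smul_eq_mul, mul_zero,
      smul_one_add_vecMulVec_fin_three, mul_comm (w₀ z) (log _)]
  have hA : A x = (a / x - b / (1 - x)) • 1 + vecMulVec ![0, 1 / x, -(1 / (1 - x))] ![1, 0, 0] :=
    (smul_one_add_vecMulVec_fin_three ..).symm
  have hφ : ![1, 0, 0] ⬝ᵥ v x = 0 := by simp [v]
  have hv : HasDerivAt v ![0, 1 / x, -(1 / (1 - x))] x := by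
    refine hasDerivAt_pi.2 fun i => ?_
    fin_cases i
    exacts [hasDerivAt_const x 0, one_div x ▸ hasDerivAt_log hx, hasDerivAt_log_one_sub hx']
  have hw : HasDerivAt w₀ ((a / x - b / (1 - x)) * w₀ x) x :=
    hasDerivAt_exp_mul_log_add_mul_log_one_sub a b hx hx'
  rw [hΦ, hA]
  exact ⟨hasDerivAt_smul_matrix hw (hasDerivAt_one_add_vecMulVec hv hφ),
    det_smul_one_add_vecMulVec _ hφ, exp_ne_zero _⟩
end

section
/- Let α, β, γ ∈ ℂ with γ ∉ {0, -1, -2, …} (i.e., γ ≠ -n for all natural numbers n). Define the Gauss hypergeometric series F(x) = ∑_{n=0}^∞ ((α)_n (β)_n / (γ)_n) · xⁿ/n!, where (q)_n = q(q+1)⋯(q+n-1) is the ascending Pochhammer symbol. Then: (i) the series converges for every x ∈ ℂ with |x| < 1, so F is a holomorphic function on the open unit ball; and (ii) F satisfies Gauss' hypergeometric equation there: x(1-x)·F''(x) + (γ - (α+β+1)x)·F'(x) - αβ·F(x) = 0 for all |x| < 1. -/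
/-- The `n`-th term of the Gauss hypergeometric series:
`((α)ₙ(β)ₙ/(γ)ₙ)·xⁿ/n!`, where `(q)ₙ` is the ascending Pochhammer symbol. -/
noncomputable def hgTerm (α β γ x : ℂ) (n : ℕ) : ℂ :=
  ((ascPochhammer ℂ n).eval α * (ascPochhammer ℂ n).eval β / (ascPochhammer ℂ n).eval γ) *
    x ^ n / n.factorial

/-- The Gauss hypergeometric series `₂F₁(α,β,γ;x) = ∑ₙ ((α)ₙ(β)ₙ/(γ)ₙ)·xⁿ/n!`. -/
noncomputable def hgF (α β γ x : ℂ) : ℂ := ∑' n : ℕ, hgTerm α β γ x n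

/-!
Let `θ = z d/dz` be the Euler operator. On power series `θ + a` multiplies the `n`-th coefficient by
`n + a`, so the recurrence `(γ + n) (n + 1) cₙ₊₁ = (α + n) (β + n) cₙ` for the hypergeometric
coefficients says precisely that `(θ + γ) F' = (θ + α) (θ + β) F`. Expanding both sides gives Gauss'
equation. No division by `z` is involved, so the origin is not special.
-/

open FormalMultilinearSeries Metric
open scoped ENNReal

section PowerSeries

variable {𝕜 : Type*} [NontriviallyNormedField 𝕜] {f : 𝕜 → 𝕜} {c : ℕ → 𝕜} {r : ℝ≥0∞}

theorem eq_ofScalars_of_coeff_eq {p : FormalMultilinearSeries 𝕜 𝕜 𝕜}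
    (hp : ∀ n, p.coeff n = c n) : p = ofScalars 𝕜 c := by
  ext1 n
  rw [← mkPiRing_coeff_eq p, ← mkPiRing_coeff_eq (ofScalars 𝕜 c), coeff_ofScalars, hp]

theorem derivSeries_ofScalars_coeff_one (c : ℕ → 𝕜) (n : ℕ) :
    (ofScalars 𝕜 c).derivSeries.coeff n 1 = (n + 1) * c (n + 1) := by
  simp

/-- The shifted Euler operator `θ + a`, where `θ = z d/dz`. Gauss' equation factors through it. -/
noncomputable def eulerAdd (a : 𝕜) (f : 𝕜 → 𝕜) (z : 𝕜) : 𝕜 :=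
  z * deriv f z + a * f z

theorem eulerAdd_eulerAdd {a b z : 𝕜} (hf : DifferentiableAt 𝕜 f z)
    (hf' : DifferentiableAt 𝕜 (deriv f) z) :
    eulerAdd a (eulerAdd b f) z =
      z ^ 2 * deriv (deriv f) z + (a + b + 1) * z * deriv f z + a * b * f z := by
  have hderiv : HasDerivAt (eulerAdd b f)
      (1 * deriv f z + z * deriv (deriv f) z + b * deriv f z) z :=
    ((hasDerivAt_id z).mul hf'.hasDerivAt).add (hf.hasDerivAt.const_mul b)
  rw [eulerAdd, hderiv.deriv, eulerAdd]
  ring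

variable [CompleteSpace 𝕜]

theorem hasFPowerSeriesOnBall_deriv_ofScalars {x : 𝕜}
    (hf : HasFPowerSeriesOnBall f (ofScalars 𝕜 c) x r) :
    HasFPowerSeriesOnBall (deriv f) (ofScalars 𝕜 fun n ↦ (n + 1) * c (n + 1)) x r := by
  have hseries : (ContinuousLinearMap.apply 𝕜 𝕜 1).compFormalMultilinearSeries
      (ofScalars 𝕜 c).derivSeries = ofScalars 𝕜 fun n ↦ (n + 1) * c (n + 1) :=
    eq_ofScalars_of_coeff_eq fun n ↦ derivSeries_ofScalars_coeff_one c n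
  rw [← hseries]
  exact (ContinuousLinearMap.apply 𝕜 𝕜 1).comp_hasFPowerSeriesOnBall hf.fderiv

theorem hasFPowerSeriesOnBall_sub_mul_deriv_ofScalars {x : 𝕜}
    (hf : HasFPowerSeriesOnBall f (ofScalars 𝕜 c) x r) :
    HasFPowerSeriesOnBall (fun z ↦ (z - x) * deriv f z) (ofScalars 𝕜 fun n ↦ n * c n) x r := by
  have hseries : (ofScalars 𝕜 c).derivSeries.unshift 0 = ofScalars 𝕜 fun n ↦ n * c n := by
    refine eq_ofScalars_of_coeff_eq fun n ↦ ?_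
    cases n with
    | zero => simp [coeff, unshift]
    | succ n => exact (derivSeries_ofScalars_coeff_one c n).trans (by rw [Nat.cast_succ])
  rw [← hseries]
  simpa using hf.fderiv.unshift (z := 0)

theorem hasFPowerSeriesOnBall_eulerAdd_ofScalars (a : 𝕜)
    (hf : HasFPowerSeriesOnBall f (ofScalars 𝕜 c) 0 r) :
    HasFPowerSeriesOnBall (eulerAdd a f) (ofScalars 𝕜 fun n ↦ (a + n) * c n) 0 r := by
  have hseries : ofScalars 𝕜 (fun n ↦ n * c n) + a • ofScalars 𝕜 c =
      ofScalars 𝕜 fun n ↦ (a + n) * c n := by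
    rw [← ofScalars_smul, ← ofScalars_add]
    congr 1
    ext n
    simp only [Pi.add_apply, Pi.smul_apply, smul_eq_mul]
    ring
  rw [← hseries]
  simpa only [sub_zero] using!
    (hasFPowerSeriesOnBall_sub_mul_deriv_ofScalars hf).add (hf.const_smul (c := a))

end PowerSeries

section Hypergeometric

theorem ordinaryHypergeometricCoefficient_succ_recurrence {𝕂 : Type*} [Field 𝕂] [CharZero 𝕂]
    (a b : 𝕂) {c : 𝕂} {n : ℕ} (hc : c + n ≠ 0) :
    (c + n) * ((n + 1) * ordinaryHypergeometricCoefficient a b c (n + 1)) =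
      (a + n) * ((b + n) * ordinaryHypergeometricCoefficient a b c n) := by
  have hn : (n : 𝕂) + 1 ≠ 0 := n.cast_add_one_ne_zero
  simp only [ordinaryHypergeometricCoefficient, ascPochhammer_succ_eval, Nat.factorial_succ,
    Nat.cast_mul, Nat.cast_succ, mul_inv]
  field_simp

section NormedField

variable {𝕂 : Type*} [NontriviallyNormedField 𝕂] [CompleteSpace 𝕂] {a b c : 𝕂} {r : ℝ≥0∞}

theorem eulerAdd_deriv_ordinaryHypergeometric [CharZero 𝕂] (hc : ∀ n : ℕ, c ≠ -n)
    (hF : HasFPowerSeriesOnBall (₂F₁ a b c) (ordinaryHypergeometricSeries 𝕂 a b c) 0 r)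
    {x : 𝕂} (hx : x ∈ eball 0 r) :
    eulerAdd c (deriv (₂F₁ a b c)) x = eulerAdd a (eulerAdd b (₂F₁ a b c)) x := by
  have hleft := hasFPowerSeriesOnBall_eulerAdd_ofScalars c
    (hasFPowerSeriesOnBall_deriv_ofScalars hF)
  have hright := hasFPowerSeriesOnBall_eulerAdd_ofScalars a
    (hasFPowerSeriesOnBall_eulerAdd_ofScalars b hF)
  simp only [← ordinaryHypergeometricCoefficient_succ_recurrence a b
    fun h ↦ hc _ (eq_neg_of_add_eq_zero_left h)] at hright
  exact hleft.unique hright hx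

theorem gauss_equation_ordinaryHypergeometric [CharZero 𝕂] (hc : ∀ n : ℕ, c ≠ -n)
    (hF : HasFPowerSeriesOnBall (₂F₁ a b c) (ordinaryHypergeometricSeries 𝕂 a b c) 0 r)
    {x : 𝕂} (hx : x ∈ eball 0 r) :
    x * (1 - x) * deriv (deriv (₂F₁ a b c)) x + (c - (a + b + 1) * x) * deriv (₂F₁ a b c) x
      - a * b * ₂F₁ a b c x = 0 := by
  have hfactored := eulerAdd_deriv_ordinaryHypergeometric hc hF hx
  rw [eulerAdd_eulerAdd (hF.analyticAt_of_mem hx).differentiableAt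
    (hF.analyticAt_of_mem hx).deriv.differentiableAt, eulerAdd] at hfactored
  linear_combination hfactored

end NormedField

section RCLike

variable {𝕂 : Type*} [RCLike 𝕂]

theorem one_le_radius_ordinaryHypergeometricSeries (𝔸 : Type*) [NormedDivisionRing 𝔸]
    [NormedAlgebra 𝕂 𝔸] (a b c : 𝕂) : 1 ≤ (ordinaryHypergeometricSeries 𝔸 a b c).radius := by
  by_cases hpoly : ∃ k : ℕ, (k : 𝕂) = -a ∨ (k : 𝕂) = -b ∨ (k : 𝕂) = -c
  · suffices (ordinaryHypergeometricSeries 𝔸 a b c).radius = ⊤ from this ▸ le_top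
    obtain ⟨k, hk | hk | hk⟩ := hpoly <;> obtain rfl := neg_eq_iff_eq_neg.1 hk.symm
    · exact ordinaryHypergeometric_radius_top_of_neg_nat₁ 𝔸 b c
    · exact ordinaryHypergeometric_radius_top_of_neg_nat₂ 𝔸 a c
    · exact ordinaryHypergeometric_radius_top_of_neg_nat₃ 𝔸 a b
  · push Not at hpoly
    exact (ordinaryHypergeometricSeries_radius_eq_one 𝔸 a b c hpoly).ge

theorem hasFPowerSeriesOnBall_ordinaryHypergeometric (𝔸 : Type*) [NormedDivisionRing 𝔸]
    [NormedAlgebra 𝕂 𝔸] [CompleteSpace 𝔸] (a b c : 𝕂) :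
    HasFPowerSeriesOnBall (₂F₁ a b c : 𝔸 → 𝔸) (ordinaryHypergeometricSeries 𝔸 a b c) 0 1 :=
  have hradius := one_le_radius_ordinaryHypergeometricSeries 𝔸 a b c
  ((ordinaryHypergeometricSeries 𝔸 a b c).hasFPowerSeriesOnBall
    (one_pos.trans_le hradius)).mono one_pos hradius

theorem stmt7_general (a b c : 𝕂) (hc : ∀ n : ℕ, c ≠ -n) :
    (∀ x : 𝕂, ‖x‖ < 1 → Summable fun n ↦ ordinaryHypergeometricSeries 𝕂 a b c n fun _ ↦ x) ∧
    DifferentiableOn 𝕂 (₂F₁ a b c) (ball (0 : 𝕂) 1) ∧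
    ∀ x ∈ ball (0 : 𝕂) 1,
      x * (1 - x) * deriv (deriv (₂F₁ a b c)) x
        + (c - (a + b + 1) * x) * deriv (₂F₁ a b c) x
        - a * b * ₂F₁ a b c x = 0 := by
  have hF := hasFPowerSeriesOnBall_ordinaryHypergeometric 𝕂 a b c
  have hball : eball (0 : 𝕂) 1 = ball 0 1 := by simpa using eball_ofReal (x := (0 : 𝕂)) (ε := 1)
  refine ⟨fun x hx ↦ (hF.hasSum ?_).summable, hball ▸ hF.differentiableOn, fun x hx ↦ ?_⟩
  · rwa [hball, mem_ball_zero_iff]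
  · exact gauss_equation_ordinaryHypergeometric hc hF (hball ▸ hx)

end RCLike

theorem hgTerm_eq_ordinaryHypergeometricSeries (α β γ x : ℂ) :
    hgTerm α β γ x = fun n ↦ ordinaryHypergeometricSeries ℂ α β γ n fun _ ↦ x := by
  ext n
  rw [hgTerm, ordinaryHypergeometricSeries_apply_eq, smul_eq_mul]
  ring

theorem hgF_eq_ordinaryHypergeometric (α β γ : ℂ) : hgF α β γ = ₂F₁ α β γ := by
  ext x
  rw [hgF, hgTerm_eq_ordinaryHypergeometricSeries]
  rfl

end Hypergeometric

/-- For `γ` not a nonpositive integer, the hypergeometric series converges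
on the open unit ball, defines a holomorphic function there, and satisfies Gauss'
hypergeometric equation `x(1-x)F'' + (γ-(α+β+1)x)F' - αβF = 0` for `|x| < 1`. -/
theorem stmt7 (α β γ : ℂ) (hγ : ∀ n : ℕ, γ ≠ -(n : ℂ)) :
    (∀ x : ℂ, ‖x‖ < 1 → Summable (hgTerm α β γ x)) ∧
    DifferentiableOn ℂ (hgF α β γ) (Metric.ball 0 1) ∧
    ∀ x ∈ Metric.ball (0 : ℂ) 1,
      x * (1 - x) * deriv (deriv (hgF α β γ)) x
        + (γ - (α + β + 1) * x) * deriv (hgF α β γ) x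
        - α * β * hgF α β γ x = 0 := by
  simpa only [hgTerm_eq_ordinaryHypergeometricSeries, hgF_eq_ordinaryHypergeometric] using
    stmt7_general α β γ hγ
end
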